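/- Let α, β < ε₀ and let k ≥ 2 be a natural number with α ↘ₖ β+1. Then for every natural number k' with k' ≤ F_β(k) we have F_β(k') < F_α(k). In particular F_β(k) < F_α(k). -/

import Mathlib

/-!
The argument compares values of the hierarchy along descents `α ↘ₖ γ`.

* Descents only decrease values: if `α ↘ₘ γ` then `F_γ(m) ≤ F_α(m)` (`F_le_of_red`). A limit
  step preserves the value at `m`, and a successor step drops `m` of `m + 1` iterations of an
  inflationary function.
* The fundamental sequences have the Bachmann property (`red_fs_of_le`): if `n ≤ m` and `α` is
  a limit, then `{α}(m) ↘ₘ {α}(n)`. This follows from the compatibility of descents with sums and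
  with `ω ^ ·`, and from the fact that every notation descends to `0`.
* Together these give, by induction on `α`, that every `F_α` is monotone (`F_mono`).

If now `α ↘ₖ β + 1` and `k ≥ 2`, then `F_α(k) ≥ F_β^(k+1)(k) ≥ F_β(F_β(F_β(k)))`, which exceeds
`F_β(F_β(k)) ≥ F_β(k')` for every `k' ≤ F_β(k)`.

The induction along fundamental sequences is justified directly on notations (`desc_wf`), by
accessibility of `ω ^ e`, then `ω ^ e * m`, then `ω ^ e * m + a`. Consequently everything except
the identity `{β + 1} = β` holds for arbitrary notations, in normal form or not.
-/

namespace Paper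

/-- `pred? o = some β` when the notation `o` denotes a successor ordinal `β + 1`;
`pred? o = none` when `o` denotes `0` or a limit ordinal. -/
def pred? : ONote → Option ONote
  | ONote.zero => none
  | ONote.oadd e m a =>
    match a with
    | ONote.oadd e' m' a' => (pred? (ONote.oadd e' m' a')).map (ONote.oadd e m)
    | ONote.zero => if e = 0 then some (ONote.ofNat ((m : ℕ) - 1)) else none

/-- The fundamental sequence: `fs α n` is `{α}(n)`.  We have `{0}(n) = 0`,
`{β+1}(n) = β`, `{γ + ω^(δ+1)}(n) = γ + ω^δ·(n+1)` and `{γ + ω^δ}(n) = γ + ω^({δ}(n))`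
for `δ` a limit. -/
def fs : ONote → ℕ → ONote
  | ONote.zero, _ => ONote.zero
  | ONote.oadd e m a, n =>
    match a with
    | ONote.oadd e' m' a' => ONote.oadd e m (fs (ONote.oadd e' m' a') n)
    | ONote.zero =>
      match e with
      | ONote.zero => ONote.ofNat ((m : ℕ) - 1)
      | ONote.oadd e1 m1 a1 =>
        let tail : ONote :=
          match pred? (ONote.oadd e1 m1 a1) with
          | some p => ONote.oadd p ⟨n + 1, n.succ_pos⟩ ONote.zero
          | none => ONote.oadd (fs (ONote.oadd e1 m1 a1) n) 1 ONote.zero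
        if (m : ℕ) = 1 then tail
        else ONote.oadd (ONote.oadd e1 m1 a1) ⟨max ((m : ℕ) - 1) 1, by omega⟩ tail

/-- Iteration of the fundamental sequence: `fund α n x` applies `{·}(n)` to `α`, `x` times. -/
def fund (α : ONote) (n : ℕ) : ℕ → ONote
  | 0 => α
  | x + 1 => fs (fund α n x) n

/-- `StepAt α n x β` expresses `α ↘ₙˣ β`: some `y ≤ x` has `fund α n y = β`. -/
def StepAt (α : ONote) (n x : ℕ) (β : ONote) : Prop :=
  ∃ y ≤ x, fund α n y = β

/-- `Step α n β` expresses `α ↘ₙ β`. -/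
def Step (α : ONote) (n : ℕ) (β : ONote) : Prop :=
  ∃ x, StepAt α n x β


mutual
  /-- The graph of the fast-growing hierarchy: `FRel α n r` means `F_α(n) = r`.
  We have `F_0(n) = n+1`, `F_(β+1)(n) = F_β^(n+1)(n)` and `F_λ(n) = F_({λ}(n))(n)`
  for `λ` a limit ordinal. -/
  inductive FRel : ONote → ℕ → ℕ → Prop
    | zero (n : ℕ) : FRel 0 n (n + 1)
    | succ {α β : ONote} {n r : ℕ} (h : pred? α = some β) (hi : FIter β (n + 1) n r) :
        FRel α n r
    | limit {α : ONote} {n r : ℕ} (h0 : α ≠ 0) (h : pred? α = none)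
        (hr : FRel (fs α n) n r) : FRel α n r

  /-- `FIter β k m r` means `F_β^k(m) = r`, i.e. the `k`-fold iterate of `F_β` at `m` is `r`. -/
  inductive FIter : ONote → ℕ → ℕ → ℕ → Prop
    | zero (β : ONote) (m : ℕ) : FIter β 0 m m
    | succ {β : ONote} {k m m' r : ℕ} (h : FIter β k m m') (h' : FRel β m' r) :
        FIter β (k + 1) m r
end

open ONote

/-! ### Recursion equations for fundamental sequences -/

theorem fs_zero (n : ℕ) : fs 0 n = 0 := rfl

theorem pred?_zero : pred? 0 = none := rfl

theorem ne_zero_of_pred? {o p : ONote} (h : pred? o = some p) : o ≠ 0 := by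
  rintro rfl
  simp [pred?_zero] at h

theorem fs_tail {a : ONote} (ha : a ≠ 0) (e : ONote) (m : ℕ+) (n : ℕ) :
    fs (oadd e m a) n = oadd e m (fs a n) := by
  cases a with
  | zero => exact absurd rfl ha
  | oadd e' m' a' => rw [fs]

theorem pred?_tail {a : ONote} (ha : a ≠ 0) (e : ONote) (m : ℕ+) :
    pred? (oadd e m a) = (pred? a).map (oadd e m) := by
  cases a with
  | zero => exact absurd rfl ha
  | oadd e' m' a' => rw [pred?]

theorem fs_nat (m : ℕ+) (n : ℕ) : fs (oadd 0 m 0) n = ofNat ((m : ℕ) - 1) := by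
  change fs (oadd zero m zero) n = _
  rw [fs]

theorem pred?_nat (m : ℕ+) : pred? (oadd 0 m 0) = some (ofNat ((m : ℕ) - 1)) := by
  change pred? (oadd zero m zero) = _
  rw [pred?]; rfl

theorem pred?_pow {e : ONote} (he : e ≠ 0) (m : ℕ+) : pred? (oadd e m 0) = none := by
  change pred? (oadd e m zero) = _
  rw [pred?]; simp [he]

theorem fs_pow_succ {e p : ONote} (h : pred? e = some p) (n : ℕ) :
    fs (oadd e 1 0) n = oadd p n.succPNat 0 := by
  cases e with
  | zero => exact absurd rfl (ne_zero_of_pred? h)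
  | oadd e' m' a' =>
    change fs (oadd _ 1 zero) n = _
    rw [fs]; simp [h]; rfl

theorem fs_pow_limit {e : ONote} (he : e ≠ 0) (h : pred? e = none) (n : ℕ) :
    fs (oadd e 1 0) n = oadd (fs e n) 1 0 := by
  cases e with
  | zero => exact absurd rfl he
  | oadd e' m' a' =>
    change fs (oadd _ 1 zero) n = _
    rw [fs]; simp [h]

theorem fs_coeff {e : ONote} (he : e ≠ 0) (m : ℕ+) (n : ℕ) :
    fs (oadd e (m + 1) 0) n = oadd e m (fs (oadd e 1 0) n) := by
  cases e with
  | zero => exact absurd rfl he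
  | oadd e' m' a' =>
    change fs (oadd _ (m + 1) zero) n = oadd _ m (fs (oadd _ 1 zero) n)
    have hm : max (m : ℕ) 1 = m := max_eq_left m.pos
    rw [fs, fs]
    simp [hm]
    rfl

theorem fs_eq_of_pred? {o p : ONote} (h : pred? o = some p) (n : ℕ) : fs o n = p := by
  induction o generalizing p with
  | zero => exact absurd rfl (ne_zero_of_pred? h)
  | oadd e m a _ iha =>
    by_cases ha : a = 0
    · subst ha
      by_cases he : e = 0
      · subst he
        rw [pred?_nat] at h
        rw [fs_nat]; exact Option.some.inj h
      · simp [pred?_pow he] at h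
    · rw [pred?_tail ha, Option.map_eq_some_iff] at h
      obtain ⟨q, hq, rfl⟩ := h
      rw [fs_tail ha, iha hq]

/-- This is the only fact for which normal forms matter: `β + 1` is computed by `ONote.add`,
which on arbitrary notations need not append `1` at the end. -/
theorem pred?_add_one {b : ONote} (hb : b.NF) : pred? (b + 1) = some b := by
  induction b with
  | zero => rfl
  | oadd e m a _ iha =>
    have ha := iha hb.snd
    by_cases he : e = 0
    · subst he
      obtain rfl := hb.zero_of_zero rfl
      have : oadd 0 m 0 + 1 = oadd 0 (m + 1) 0 := rfl
      rw [this, pred?_nat]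
      obtain ⟨m, hm⟩ := m
      obtain ⟨m, rfl⟩ := Nat.exists_eq_succ_of_ne_zero hm.ne'
      rfl
    · have hfst := hb.fst
      have hsnd := hb.snd
      have hpos : 0 < ONote.repr e := by
        cases e with
        | zero => exact absurd rfl he
        | oadd e' m' a' => exact oadd_pos _ _ _
      have hbelow : NFBelow (a + 1) (ONote.repr e) :=
        add_nfBelow hb.snd' (NFBelow.oadd NF.zero NFBelow.zero hpos)
      have : NF (oadd e m (a + 1)) := hfst.oadd m hbelow
      have key : oadd e m a + 1 = oadd e m (a + 1) := by
        rw [← repr_inj, repr_add]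
        simp [repr_add, add_assoc]
      rw [key, pred?_tail (ne_zero_of_pred? ha), ha]; rfl

/-! ### Well-foundedness of descent -/

/-- `Desc y x`: the notation `y` is one of the terms `{x}(n)`, where `x` is nonzero. -/
def Desc (y x : ONote) : Prop := x ≠ 0 ∧ ∃ n, y = fs x n

theorem acc_zero : Acc Desc 0 := ⟨_, fun _ h => absurd rfl h.1⟩

theorem acc_tail {e : ONote} {m : ℕ+} (h : Acc Desc (oadd e m 0)) {a : ONote}
    (ha : Acc Desc a) : Acc Desc (oadd e m a) := by
  induction ha with
  | intro a _ ih =>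
    by_cases h0 : a = 0
    · rwa [h0]
    · refine ⟨_, ?_⟩
      rintro _ ⟨-, n, rfl⟩
      rw [fs_tail h0]
      exact ih _ ⟨h0, n, rfl⟩

theorem acc_coeff {e : ONote} (h : Acc Desc (oadd e 1 0)) (m : ℕ+) :
    Acc Desc (oadd e m 0) := by
  induction m using PNat.recOn with
  | one => exact h
  | succ m ih =>
    refine ⟨_, ?_⟩
    rintro _ ⟨-, n, rfl⟩
    by_cases he : e = 0
    · subst he
      rw [fs_nat]
      obtain ⟨m, hm⟩ := m
      obtain ⟨m, rfl⟩ := Nat.exists_eq_succ_of_ne_zero hm.ne'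
      exact ih
    · rw [fs_coeff he]
      exact acc_tail ih (h.inv ⟨by rintro ⟨⟩, n, rfl⟩)

theorem acc_pow {e : ONote} (h : Acc Desc e) : Acc Desc (oadd e 1 0) := by
  induction h with
  | intro e _ ih =>
    refine ⟨_, ?_⟩
    rintro _ ⟨-, n, rfl⟩
    by_cases he : e = 0
    · subst he
      rw [fs_nat]; exact acc_zero
    · cases hp : pred? e with
      | some p =>
        rw [fs_pow_succ hp]
        exact acc_coeff (ih p ⟨he, 0, (fs_eq_of_pred? hp 0).symm⟩) _
      | none =>
        rw [fs_pow_limit he hp]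
        exact ih _ ⟨he, n, rfl⟩

theorem desc_wf : WellFounded Desc := by
  refine ⟨fun o => ?_⟩
  induction o with
  | zero => exact acc_zero
  | oadd e m a ihe iha => exact acc_tail (acc_coeff (acc_pow ihe) m) iha

/-! ### Descents and the Bachmann property -/

/-- `Red n a b` is the descent relation `a ↘ₙ b`, as the reflexive transitive closure of
`a ↦ {a}(n)`. -/
def Red (n : ℕ) : ONote → ONote → Prop := Relation.ReflTransGen fun x y => y = fs x n

theorem red_step (n : ℕ) (a : ONote) : Red n a (fs a n) := .single rfl

theorem red_fund (a : ONote) (n x : ℕ) : Red n a (fund a n x) := by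
  induction x with
  | zero => exact .refl
  | succ x ih => exact ih.trans (red_step _ _)

theorem red_tail {n : ℕ} {a b : ONote} (h : Red n a b) (e : ONote) (m : ℕ+) :
    Red n (oadd e m a) (oadd e m b) := by
  induction h with
  | refl => exact .refl
  | @tail x y _ hs ih =>
    subst hs
    by_cases hx : x = 0
    · subst hx; exact ih
    · refine ih.trans ?_
      rw [← fs_tail hx]
      exact red_step _ _

theorem red_zero (n : ℕ) (a : ONote) : Red n a 0 := by
  induction a using desc_wf.induction with
  | _ a ih =>
    by_cases ha : a = 0
    · rw [ha]; exact .refl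
    · exact (red_step n a).trans (ih _ ⟨ha, n, rfl⟩)

theorem red_coeff_pred (n : ℕ) (e : ONote) (m : ℕ+) :
    Red n (oadd e (m + 1) 0) (oadd e m 0) := by
  refine (red_step n _).trans ?_
  by_cases he : e = 0
  · subst he
    rw [fs_nat]
    obtain ⟨m, hm⟩ := m
    obtain ⟨m, rfl⟩ := Nat.exists_eq_succ_of_ne_zero hm.ne'
    exact .refl
  · rw [fs_coeff he]
    exact red_tail (red_zero n _) e m

theorem red_coeff (n : ℕ) (e : ONote) {i j : ℕ} (h : i ≤ j) :
    Red n (oadd e j.succPNat 0) (oadd e i.succPNat 0) := by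
  induction h with
  | refl => exact .refl
  | step _ ih => exact (red_coeff_pred n e _).trans ih

theorem red_pow {n : ℕ} {a b : ONote} (h : Red n a b) : Red n (oadd a 1 0) (oadd b 1 0) := by
  induction h with
  | refl => exact .refl
  | @tail x y _ hs ih =>
    subst hs
    by_cases hx : x = 0
    · subst hx; exact ih
    · refine ih.trans ((red_step n _).trans ?_)
      cases hp : pred? x with
      | some p =>
        rw [fs_pow_succ hp, fs_eq_of_pred? hp]
        exact red_coeff n p (Nat.zero_le n)
      | none =>
        rw [fs_pow_limit hx hp]

/-- The Bachmann property. For successors both sides are the predecessor, so no case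
distinction is needed in the statement. -/
theorem red_fs_of_le {n m : ℕ} (h : n ≤ m) (a : ONote) : Red m (fs a m) (fs a n) := by
  induction a with
  | zero => exact .refl
  | oadd e c a ihe iha =>
    by_cases ha : a = 0
    · subst ha
      by_cases he : e = 0
      · subst he
        rw [fs_nat, fs_nat]; exact .refl
      · have hone : Red m (fs (oadd e 1 0) m) (fs (oadd e 1 0) n) := by
          cases hp : pred? e with
          | some p =>
            rw [fs_pow_succ hp, fs_pow_succ hp]
            exact red_coeff m p h
          | none =>
            rw [fs_pow_limit he hp, fs_pow_limit he hp]
            exact red_pow ihe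
        induction c using PNat.recOn with
        | one => exact hone
        | succ c _ =>
          rw [fs_coeff he, fs_coeff he]
          exact red_tail hone e c
    · rw [fs_tail ha, fs_tail ha]
      exact red_tail iha e c

/-! ### The fast-growing hierarchy as a family of functions -/

theorem fIter_iterate {b : ONote} {f : ℕ → ℕ} (hf : ∀ n, FRel b n (f n)) (k m : ℕ) :
    FIter b k m (f^[k] m) := by
  induction k with
  | zero => exact .zero _ _
  | succ k ih =>
    rw [Function.iterate_succ_apply']
    exact .succ ih (hf _)

theorem fRel_total (a : ONote) : ∃ f : ℕ → ℕ, ∀ n, FRel a n (f n) := by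
  induction a using desc_wf.induction with
  | _ a ih =>
    by_cases ha : a = 0
    · subst ha; exact ⟨_, FRel.zero⟩
    · cases hp : pred? a with
      | some p =>
        obtain ⟨f, hf⟩ := ih p ⟨ha, 0, (fs_eq_of_pred? hp 0).symm⟩
        exact ⟨_, fun n => .succ hp (fIter_iterate hf (n + 1) n)⟩
      | none =>
        have h : ∀ n, ∃ r, FRel a n r := fun n =>
          (ih _ ⟨ha, n, rfl⟩).elim fun f hf => ⟨_, .limit ha hp (hf n)⟩
        exact ⟨_, fun n => (h n).choose_spec⟩

/-- The function `F_a` whose graph is `FRel a`; see `F_eq` for uniqueness of values. -/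
noncomputable def F (a : ONote) : ℕ → ℕ := (fRel_total a).choose

theorem fRel_F (a : ONote) (n : ℕ) : FRel a n (F a n) := (fRel_total a).choose_spec n

theorem fRel_unique {a : ONote} {n r : ℕ} (h : FRel a n r) : ∀ {s}, FRel a n s → r = s := by
  refine FRel.rec (motive_1 := fun a n r _ => ∀ {s}, FRel a n s → r = s)
    (motive_2 := fun b k m r _ => ∀ {s}, FIter b k m s → r = s) ?_ ?_ ?_ ?_ ?_ h
  · intro n s hs
    cases hs with
    | zero => rfl
    | succ hp _ => exact absurd rfl (ne_zero_of_pred? hp)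
    | limit h0 _ _ => exact absurd rfl h0
  · intro a b n r hp _ ih s hs
    cases hs with
    | zero => exact absurd rfl (ne_zero_of_pred? hp)
    | succ hp' hi =>
      obtain rfl := Option.some.inj (hp.symm.trans hp')
      exact ih hi
    | limit _ hp' _ => simp [hp] at hp'
  · intro a n r h0 hp _ ih s hs
    cases hs with
    | zero => exact absurd rfl h0
    | succ hp' _ => simp [hp] at hp'
    | limit _ _ hr => exact ih hr
  · intro b m s hs
    cases hs; rfl
  · intro b k m m' r _ _ ih ih' s hs
    cases hs with
    | succ hi hr =>
      obtain rfl := ih hi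
      exact ih' hr

theorem F_eq {a : ONote} {n r : ℕ} (h : FRel a n r) : F a n = r := fRel_unique (fRel_F a n) h

theorem F_zero (n : ℕ) : F 0 n = n + 1 := F_eq (.zero n)

theorem F_succ {a p : ONote} (h : pred? a = some p) (n : ℕ) : F a n = (F p)^[n + 1] n :=
  F_eq (.succ h (fIter_iterate (fRel_F p) _ _))

theorem F_limit {a : ONote} (h0 : a ≠ 0) (h : pred? a = none) (n : ℕ) :
    F a n = F (fs a n) n :=
  F_eq (.limit h0 h (fRel_F _ _))

/-! ### Growth and monotonicity -/

theorem lt_F (a : ONote) (n : ℕ) : n < F a n := by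
  induction a using desc_wf.induction generalizing n with
  | _ a ih =>
    by_cases ha : a = 0
    · subst ha; rw [F_zero]; exact n.lt_succ_self
    · cases hp : pred? a with
      | some p =>
        have hF := ih p ⟨ha, 0, (fs_eq_of_pred? hp 0).symm⟩
        rw [F_succ hp, Function.iterate_succ_apply']
        exact (Function.id_le_iterate_of_id_le (fun x => (hF x).le) n n).trans_lt (hF _)
      | none =>
        rw [F_limit ha hp]
        exact ih _ ⟨ha, n, rfl⟩ n

theorem monotone_iterate_F (a : ONote) (n : ℕ) : Monotone fun k => (F a)^[k] n :=
  fun _ _ h => Function.monotone_iterate_of_id_le (fun x => (lt_F a x).le) h n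

theorem F_fs_le (a : ONote) (n : ℕ) (h0 : a ≠ 0) : F (fs a n) n ≤ F a n := by
  cases hp : pred? a with
  | some p =>
    rw [F_succ hp, fs_eq_of_pred? hp]
    exact monotone_iterate_F p n (Nat.le_add_left 1 n)
  | none => rw [F_limit h0 hp]

theorem F_le_of_red {n : ℕ} {a b : ONote} (h : Red n a b) : F b n ≤ F a n := by
  induction h with
  | refl => exact le_rfl
  | @tail x y _ hs ih =>
    subst hs
    by_cases hx : x = 0
    · subst hx; exact ih
    · exact (F_fs_le x n hx).trans ih

theorem F_mono (a : ONote) : Monotone (F a) := by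
  induction a using desc_wf.induction with
  | _ a ih =>
    intro n m h
    by_cases ha : a = 0
    · subst ha; rw [F_zero, F_zero]; omega
    · cases hp : pred? a with
      | some p =>
        have hF := ih p ⟨ha, 0, (fs_eq_of_pred? hp 0).symm⟩
        rw [F_succ hp, F_succ hp]
        exact (hF.iterate (n + 1) h).trans (monotone_iterate_F p m (Nat.succ_le_succ h))
      | none =>
        rw [F_limit ha hp, F_limit ha hp]
        -- Enlarge the argument at the fixed index `{a}(n)`, then the index along a descent.
        exact (ih _ ⟨ha, n, rfl⟩ h).trans (F_le_of_red (red_fs_of_le h a))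

/-- For `k ≥ 2` and `α ↘ₖ β+1`: `F_β(k)` is defined and `F_β(k) < F_α(k)`, and
for every `k' ≤ F_β(k)` we have `F_β(k') < F_α(k)`. -/
theorem fast_growing_step (α β : ONote) (hα : α.NF) (hβ : β.NF) (k : ℕ)
    (hk : 2 ≤ k) (hstep : Step α k (β + 1)) (K : ℕ) (hK : FRel α k K) :
    ∃ v, FRel β k v ∧ v < K ∧ ∀ k' ≤ v, ∃ v', FRel β k' v' ∧ v' < K := by
  obtain ⟨x, y, -, hy⟩ := hstep
  have hred : Red k α (β + 1) := hy ▸ red_fund α k y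
  have hle : (F β)^[k + 1] k ≤ K := by
    rw [← F_succ (pred?_add_one hβ), ← F_eq hK]
    exact F_le_of_red hred
  -- `k ≥ 2` provides at least three iterations.
  have h3 : F β (F β (F β k)) ≤ K := (monotone_iterate_F β k (by omega : 3 ≤ k + 1)).trans hle
  have h2 : F β (F β k) < K := (lt_F β _).trans_le h3
  exact ⟨F β k, fRel_F β k, (lt_F β _).trans h2,
    fun k' hk' => ⟨F β k', fRel_F β k', (F_mono β hk').trans_lt h2⟩⟩

end Paper
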